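/- Let χ₁, χ₂ : ℂˣ → ℂˣ be group homomorphisms. Then Ind_{ℂ/ℝ}(χ₁) and Ind_{ℂ/ℝ}(χ₂) are equivalent if and only if χ₁ = χ₂ or χ₁ = χ₂ ∘ conj. Explicitly: there exists g ∈ GL(2,ℂ) with g · A_{χ₁}(z) · g⁻¹ = A_{χ₂}(z) for all z ∈ ℂˣ and g · B_{χ₁} · g⁻¹ = B_{χ₂}, if and only if χ₁ = χ₂ or χ₁ = χ₂ ∘ conj. -/

import Mathlib

/-!
An intertwiner `g` satisfies `g A₁(z) = A₂(z) g`. Reading off the first row gives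
`g₀₀ χ₁(z) = χ₂(z) g₀₀` and `g₀₁ χ₁(z̄) = χ₂(z) g₀₁` for all `z`; since `g` is invertible, one of
`g₀₀`, `g₀₁` is nonzero, and this forces `χ₁ = χ₂` or `χ₁ ∘ conj = χ₂`. Conversely, when
`χ₁ = χ₂ ∘ conj`, the matrix `B_{χ₂}` itself is an intertwiner: it swaps the two diagonal entries
of `A_{χ₁}(z)`, and `B_{χ₁} = B_{χ₂}` because `-1` is real.
-/

/-- Complex conjugation as an automorphism of `ℂˣ`. -/
def conjUnits : ℂˣ →* ℂˣ := Units.map (starRingEnd ℂ).toMonoidHom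

/-- The value of the induced representation `Ind_{ℂ/ℝ}(χ)` at `z ∈ ℂˣ`:
the matrix `A_χ(z) = diag(χ(z), χ(z̄))`. -/
noncomputable def indA (χ : ℂˣ →* ℂˣ) (z : ℂˣ) : Matrix (Fin 2) (Fin 2) ℂ :=
  !![((χ z : ℂˣ) : ℂ), 0; 0, ((χ (conjUnits z) : ℂˣ) : ℂ)]

/-- The value of the induced representation `Ind_{ℂ/ℝ}(χ)` at `j`:
the matrix `B_χ = [[0, χ(−1)],[1, 0]]`. -/
noncomputable def indB (χ : ℂˣ →* ℂˣ) : Matrix (Fin 2) (Fin 2) ℂ :=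
  !![0, ((χ (-1) : ℂˣ) : ℂ); 1, 0]

theorem conjUnits_conjUnits (z : ℂˣ) : conjUnits (conjUnits z) = z := by
  ext
  simp [conjUnits]

theorem conjUnits_neg_one : conjUnits (-1) = -1 := by
  ext
  simp [conjUnits]

theorem det_indB_ne_zero (χ : ℂˣ →* ℂˣ) : (indB χ).det ≠ 0 := by
  simp [indB, Matrix.det_fin_two]

/-- `Ind_{ℂ/ℝ}(χ₁)` and `Ind_{ℂ/ℝ}(χ₂)` are equivalent (conjugate by a single
element of `GL(2,ℂ)`) if and only if `χ₁ = χ₂` or `χ₁ = χ₂ ∘ conj`. -/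
theorem induced_rep_equiv_iff (χ₁ χ₂ : ℂˣ →* ℂˣ) :
    (∃ g : GL (Fin 2) ℂ,
      (∀ z : ℂˣ,
        (g : Matrix (Fin 2) (Fin 2) ℂ) * indA χ₁ z *
            ((g⁻¹ : GL (Fin 2) ℂ) : Matrix (Fin 2) (Fin 2) ℂ) = indA χ₂ z) ∧
      (g : Matrix (Fin 2) (Fin 2) ℂ) * indB χ₁ *
          ((g⁻¹ : GL (Fin 2) ℂ) : Matrix (Fin 2) (Fin 2) ℂ) = indB χ₂) ↔
    (χ₁ = χ₂ ∨ χ₁ = χ₂.comp conjUnits) := by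
  simp only [Units.mul_inv_eq_iff_eq_mul]
  constructor
  · rintro ⟨g, hA, -⟩
    have hdet : (g : Matrix (Fin 2) (Fin 2) ℂ).det ≠ 0 :=
      ((Matrix.isUnit_iff_isUnit_det _).1 g.isUnit).ne_zero
    by_cases h0 : (g : Matrix (Fin 2) (Fin 2) ℂ) 0 0 = 0
    · right
      have h1 : (g : Matrix (Fin 2) (Fin 2) ℂ) 0 1 ≠ 0 := by
        intro h1
        exact hdet (by simp [Matrix.det_fin_two, h0, h1])
      ext z
      have h := congrFun (congrFun (hA (conjUnits z)) 0) 1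
      simp only [indA, Matrix.mul_apply, Fin.sum_univ_two, conjUnits_conjUnits] at h
      simp at h
      rw [mul_comm] at h
      exact mul_right_cancel₀ h1 h
    · left
      ext z
      have h := congrFun (congrFun (hA z) 0) 0
      simp only [indA, Matrix.mul_apply, Fin.sum_univ_two] at h
      simp at h
      rw [mul_comm] at h
      exact mul_right_cancel₀ h0 h
  · rintro (rfl | rfl)
    · exact ⟨1, by simp, by simp⟩
    · refine ⟨Matrix.GeneralLinearGroup.mkOfDetNeZero (indB χ₂) (det_indB_ne_zero χ₂),
        fun z => ?_, ?_⟩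
      · change indB χ₂ * indA (χ₂.comp conjUnits) z = indA χ₂ z * indB χ₂
        simp [indA, indB, conjUnits_conjUnits, mul_comm]
      · change indB χ₂ * indB (χ₂.comp conjUnits) = indB χ₂ * indB χ₂
        simp [indB, conjUnits_neg_one]
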